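/- arXiv:2002.08946 — 4 statements merged into one kernel-verified Lean document; each statement's English description precedes it below -/
import Mathlib

section
/- Let σ, ν : ℝ² → ℝ be differentiable at a point x of the Euclidean plane, let x* ∈ ℝ², and assume the Euler identity ⟨x − x*, ∇ν(x)⟩ = −ν(x). Then the determinant and trace of the Fréchet derivative of h at x (as a linear endomorphism of ℝ²) are given by det(Dh(x)) = (1 + σ(x)(ν(x) − 1)) · ((1 − σ(x)) + (ν(x) − 1)·⟨x − x*, ∇σ(x)⟩) and tr(Dh(x)) = (1 + σ(x)(ν(x) − 1)) + (1 − σ(x)) + (ν(x) − 1)·⟨x − x*, ∇σ(x)⟩. -/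
open RealInnerProductSpace

/-!
Write `w = z - x*` and `μ = σ (ν - 1)`. Then `h(z) = z + μ(z) w`, so at `x` the derivative
`Dh(x) v = (1 + μ(x)) v + (Dμ(x) v) w` is a rank-one perturbation of a scalar map. On a space of
dimension `n` its eigenvalues are `1 + μ(x)`, with multiplicity `n - 1`, and `1 + μ(x) + Dμ(x) w`,
with eigenvector `w`. The Euler identity `Dν(x) w = -ν(x)` cancels the `σ ν` terms of the latter,
leaving `(1 - σ(x)) + (ν(x) - 1) Dσ(x) w`.
-/

section RankOnePerturbation

open Polynomial

variable {R M : Type*} [CommRing R] [AddCommGroup M] [Module R M] [Module.Free R M]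
  [Module.Finite R M]

lemma charpoly_smulRight (f : M →ₗ[R] R) (v : M) :
    (f.smulRight v).charpoly =
      X ^ Module.finrank R M - f v • X ^ (Module.finrank R M - 1) := by
  nontriviality R
  let b := Module.Free.chooseBasis R M
  have toMatrix_eq : LinearMap.toMatrix b b (f.smulRight v) =
      Matrix.vecMulVec (b.repr v) (f ∘ b) := by
    ext i j
    simp [LinearMap.toMatrix_apply, Matrix.vecMulVec_apply, mul_comm]
  have dotProduct_eq : (b.repr v) ⬝ᵥ (f ∘ b) = f v := by
    conv_rhs => rw [← b.sum_repr v]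
    simp [dotProduct, -Module.Basis.sum_repr]
  rw [← LinearMap.charpoly_toMatrix _ b, toMatrix_eq, Matrix.charpoly_vecMulVec, dotProduct_eq,
    Module.finrank_eq_card_basis b]

lemma det_smul_id_add_smulRight (c : R) (f : M →ₗ[R] R) (v : M) :
    LinearMap.det (c • LinearMap.id + f.smulRight v) =
      c ^ Module.finrank R M + c ^ (Module.finrank R M - 1) * f v := by
  have eq_algebraMap_sub :
      c • LinearMap.id + f.smulRight v = algebraMap R (Module.End R M) c - f.smulRight (-v) := by
    ext
    simp
  rw [eq_algebraMap_sub, ← LinearMap.eval_charpoly, charpoly_smulRight]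
  simp [mul_comm]

lemma trace_smul_id_add_smulRight (c : R) (f : M →ₗ[R] R) (v : M) :
    LinearMap.trace R M (c • LinearMap.id + f.smulRight v) = Module.finrank R M * c + f v := by
  simp [mul_comm]

end RankOnePerturbation

/-- The purging-type transformation with center `a`, switch `σ` and deforming factor `ν`: where
`σ = 1` it rescales about `a` by the factor `ν`, and where `σ = 0` it is the identity. -/
def purgingTransformation {R M : Type*} [Ring R] [AddCommGroup M] [Module R M]
    (a : M) (σ ν : M → R) (z : M) : M :=
  σ z • (a + ν z • (z - a)) + (1 - σ z) • z

lemma purgingTransformation_eq_add_smul_sub {R M : Type*} [Ring R] [AddCommGroup M] [Module R M]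
    (a : M) (σ ν : M → R) (z : M) :
    purgingTransformation a σ ν z = z + (σ z * (ν z - 1)) • (z - a) := by
  simp only [purgingTransformation, mul_smul, sub_smul, smul_add, smul_sub, one_smul]
  abel

section Derivative

variable {𝕜 E : Type*} [NontriviallyNormedField 𝕜] [NormedAddCommGroup E] [NormedSpace 𝕜 E]

lemma hasFDerivAt_add_smul_sub {μ : E → 𝕜} {μ' : E →L[𝕜] 𝕜} {x : E} (hμ : HasFDerivAt μ μ' x)
    (a : E) :
    HasFDerivAt (fun z => z + μ z • (z - a))
      ((1 + μ x) • ContinuousLinearMap.id 𝕜 E + μ'.smulRight (x - a)) x := by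
  rw [add_smul, one_smul, add_assoc]
  exact (hasFDerivAt_id x).fun_add (hμ.fun_smul ((hasFDerivAt_id x).sub_const a))

lemma hasFDerivAt_purgingTransformation {σ ν : E → 𝕜} {σ' ν' : E →L[𝕜] 𝕜} {x : E}
    (hσ : HasFDerivAt σ σ' x) (hν : HasFDerivAt ν ν' x) (a : E) :
    HasFDerivAt (purgingTransformation a σ ν)
      ((1 + σ x * (ν x - 1)) • ContinuousLinearMap.id 𝕜 E +
        (σ x • ν' + (ν x - 1) • σ').smulRight (x - a)) x := by
  rw [funext (purgingTransformation_eq_add_smul_sub a σ ν)]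
  exact hasFDerivAt_add_smul_sub (hσ.mul (hν.sub_const 1)) a

theorem purging_transformation_det_trace_general [FiniteDimensional 𝕜 E] [Nontrivial E]
    {σ ν : E → 𝕜} {a x : E} (hσ : DifferentiableAt 𝕜 σ x) (hν : DifferentiableAt 𝕜 ν x)
    (heuler : fderiv 𝕜 ν x (x - a) = -ν x) :
    LinearMap.det (fderiv 𝕜 (purgingTransformation a σ ν) x : E →ₗ[𝕜] E) =
      (1 + σ x * (ν x - 1)) ^ (Module.finrank 𝕜 E - 1) *
        ((1 - σ x) + (ν x - 1) * fderiv 𝕜 σ x (x - a)) ∧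
    LinearMap.trace 𝕜 E (fderiv 𝕜 (purgingTransformation a σ ν) x : E →ₗ[𝕜] E) =
      (Module.finrank 𝕜 E - 1 : ℕ) * (1 + σ x * (ν x - 1)) + (1 - σ x) +
        (ν x - 1) * fderiv 𝕜 σ x (x - a) := by
  set c := 1 + σ x * (ν x - 1) with hc
  set μ' : E →L[𝕜] 𝕜 := σ x • fderiv 𝕜 ν x + (ν x - 1) • fderiv 𝕜 σ x with hμ'
  have fderiv_eq : (fderiv 𝕜 (purgingTransformation a σ ν) x : E →ₗ[𝕜] E) =
      c • LinearMap.id + (μ' : E →ₗ[𝕜] 𝕜).smulRight (x - a) := by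
    rw [(hasFDerivAt_purgingTransformation hσ.hasFDerivAt hν.hasFDerivAt a).fderiv]
    rfl
  have radial_eigenvalue : c + μ' (x - a) = (1 - σ x) + (ν x - 1) * fderiv 𝕜 σ x (x - a) := by
    simp only [hc, hμ', add_apply, smul_apply, smul_eq_mul, heuler]
    ring
  rw [fderiv_eq, det_smul_id_add_smulRight, trace_smul_id_add_smulRight, add_assoc _ (1 - σ x),
    ← radial_eigenvalue, ContinuousLinearMap.coe_coe]
  constructor
  · rw [mul_add, pow_sub_one_mul Module.finrank_pos.ne']
  · rw [Nat.cast_pred Module.finrank_pos]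
    ring

end Derivative

/-- Determinant and trace of the Fréchet derivative of the purging-type transformation
`h(z) = σ(z)·(x* + ν(z)·(z - x*)) + (1 - σ(z))·z` at a point `x` where the deforming
factor satisfies the Euler identity `⟨x - x*, ∇ν(x)⟩ = -ν(x)`:
`det Dh(x) = (1 + σ(x)(ν(x) - 1))·((1 - σ(x)) + (ν(x) - 1)⟨x - x*, ∇σ(x)⟩)` and
`tr Dh(x) = (1 + σ(x)(ν(x) - 1)) + (1 - σ(x)) + (ν(x) - 1)⟨x - x*, ∇σ(x)⟩`. -/
theorem purging_transformation_det_trace (σ ν : EuclideanSpace ℝ (Fin 2) → ℝ)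
    (xs x : EuclideanSpace ℝ (Fin 2))
    (hσ : DifferentiableAt ℝ σ x) (hν : DifferentiableAt ℝ ν x)
    (heuler : ⟪x - xs, gradient ν x⟫ = -ν x)
    (h : EuclideanSpace ℝ (Fin 2) → EuclideanSpace ℝ (Fin 2))
    (hh : h = fun z => σ z • (xs + ν z • (z - xs)) + (1 - σ z) • z) :
    LinearMap.det
        ((fderiv ℝ h x : EuclideanSpace ℝ (Fin 2) →L[ℝ] EuclideanSpace ℝ (Fin 2)) :
          EuclideanSpace ℝ (Fin 2) →ₗ[ℝ] EuclideanSpace ℝ (Fin 2)) =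
      (1 + σ x * (ν x - 1)) * ((1 - σ x) + (ν x - 1) * ⟪x - xs, gradient σ x⟫) ∧
    LinearMap.trace ℝ (EuclideanSpace ℝ (Fin 2))
        ((fderiv ℝ h x : EuclideanSpace ℝ (Fin 2) →L[ℝ] EuclideanSpace ℝ (Fin 2)) :
          EuclideanSpace ℝ (Fin 2) →ₗ[ℝ] EuclideanSpace ℝ (Fin 2)) =
      (1 + σ x * (ν x - 1)) + (1 - σ x) + (ν x - 1) * ⟪x - xs, gradient σ x⟫ := by
  obtain rfl : h = purgingTransformation xs σ ν := hh
  rw [inner_gradient_right, conj_trivial] at heuler ⊢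
  simpa using purging_transformation_det_trace_general hσ hν heuler
end

section
/- Let x₃, x*, n₃, n₄ be vectors in the Euclidean plane ℝ² with ⟨x* − x₃, n₃⟩ > 0 and ⟨x* − x₃, n₄⟩ > 0. Define γ₃(z) := ⟨z − x₃, n₃⟩, γ₄(z) := ⟨z − x₃, n₄⟩, and f(z) := γ₃(z) + γ₄(z) − √(γ₃(z)² + γ₄(z)²). Then at every point x where γ₃(x)² + γ₄(x)² ≠ 0, f is differentiable and satisfies the strict inequality ⟨x − x*, ∇f(x)⟩ < f(x). -/
open RealInnerProductSpace

/-!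
The R-conjunction `φ a b = a + b - √(a² + b²)` is homogeneous of degree one, so Euler's identity
`a ∂₁φ + b ∂₂φ = φ` holds, and its partial derivatives `1 - a / r`, `1 - b / r`, with
`r = √(a² + b²) ≠ 0`, are nonnegative and not both zero. Hence, if the first-order Taylor
polynomials of `u` and `v` at `x` take positive values `p` and `q` at `y`, that of `φ(u, v)` takes
the value `(1 - a / r) p + (1 - b / r) q > 0` there, where `a = u x` and `b = v x`. An affine
function is its own Taylor polynomial.
-/

/-- The R-conjunction of two real numbers, for the exponent `p = 2`: it is positive exactly when
both arguments are, and so describes intersections of regions given by inequalities. -/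
noncomputable def rConj (a b : ℝ) : ℝ := a + b - √(a ^ 2 + b ^ 2)

lemma rConj_eq_mul_add_mul (a b : ℝ) :
    rConj a b = (1 - a / √(a ^ 2 + b ^ 2)) * a + (1 - b / √(a ^ 2 + b ^ 2)) * b := by
  have hsqrt : (a ^ 2 + b ^ 2) / √(a ^ 2 + b ^ 2) = √(a ^ 2 + b ^ 2) := Real.div_sqrt
  rw [rConj]
  linear_combination hsqrt

lemma one_sub_mul_add_one_sub_mul_pos {s t p q : ℝ} (hst : s ^ 2 + t ^ 2 = 1)
    (hp : 0 < p) (hq : 0 < q) : 0 < (1 - s) * p + (1 - t) * q := by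
  have hs : s ≤ 1 := by nlinarith [sq_nonneg t]
  have ht : t ≤ 1 := by nlinarith [sq_nonneg s]
  rcases hs.lt_or_eq with hs | rfl
  · exact add_pos_of_pos_of_nonneg (mul_pos (sub_pos.2 hs) hp)
      (mul_nonneg (sub_nonneg.2 ht) hq.le)
  · obtain rfl : t = 0 := by simpa using hst
    simpa using hq

section Derivative

variable {E : Type*} [NormedAddCommGroup E] [NormedSpace ℝ E] {u v : E → ℝ} {u' v' : E →L[ℝ] ℝ}
  {x y : E}

lemma hasFDerivAt_rConj (hu : HasFDerivAt u u' x) (hv : HasFDerivAt v v' x)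
    (h : u x ^ 2 + v x ^ 2 ≠ 0) :
    HasFDerivAt (fun z => rConj (u z) (v z))
      ((1 - u x / √(u x ^ 2 + v x ^ 2)) • u' + (1 - v x / √(u x ^ 2 + v x ^ 2)) • v') x := by
  refine ((hu.add hv).sub (((hu.pow 2).add (hv.pow 2)).sqrt h)).congr_fderiv ?_
  ext w
  simp only [Nat.add_one_sub_one, pow_one, nsmul_eq_mul, Nat.cast_ofNat, sub_apply, add_apply,
    smul_apply, smul_eq_mul, Pi.add_apply]
  ring

lemma rConj_add_fderiv_pos (hu : HasFDerivAt u u' x) (hv : HasFDerivAt v v' x)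
    (h : u x ^ 2 + v x ^ 2 ≠ 0) (hup : 0 < u x + u' (y - x)) (hvp : 0 < v x + v' (y - x)) :
    0 < rConj (u x) (v x) + fderiv ℝ (fun z => rConj (u z) (v z)) x (y - x) := by
  have hunit : (u x / √(u x ^ 2 + v x ^ 2)) ^ 2 + (v x / √(u x ^ 2 + v x ^ 2)) ^ 2 = 1 := by
    rw [div_pow, div_pow, Real.sq_sqrt (by positivity), ← add_div, div_self h]
  have hpos := one_sub_mul_add_one_sub_mul_pos hunit hup hvp
  rw [(hasFDerivAt_rConj hu hv h).fderiv, rConj_eq_mul_add_mul]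
  simp only [add_apply, smul_apply, smul_eq_mul]
  linarith

end Derivative

section Hyperplane

variable {E : Type*} [NormedAddCommGroup E] [InnerProductSpace ℝ E]

lemma hasFDerivAt_inner_sub (c n x : E) :
    HasFDerivAt (fun z => ⟪z - c, n⟫) (innerSLFlip ℝ n) x :=
  (innerSLFlip ℝ n).hasFDerivAt.comp x ((hasFDerivAt_id x).sub_const c)

theorem rconjunction_strict_euler_inequality_general [CompleteSpace E] {c d m n x y : E}
    (hm : 0 < ⟪y - c, m⟫) (hn : 0 < ⟪y - d, n⟫) (hx : ⟪x - c, m⟫ ^ 2 + ⟪x - d, n⟫ ^ 2 ≠ 0) :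
    DifferentiableAt ℝ (fun z => rConj ⟪z - c, m⟫ ⟪z - d, n⟫) x ∧
      ⟪x - y, gradient (fun z => rConj ⟪z - c, m⟫ ⟪z - d, n⟫) x⟫ <
        rConj ⟪x - c, m⟫ ⟪x - d, n⟫ := by
  have hu := hasFDerivAt_inner_sub c m x
  have hv := hasFDerivAt_inner_sub d n x
  have taylor (e k : E) : ⟪x - e, k⟫ + innerSLFlip ℝ k (y - x) = ⟪y - e, k⟫ := by
    rw [innerSLFlip_apply_apply, ← inner_add_left, add_comm, sub_add_sub_cancel]
  refine ⟨(hasFDerivAt_rConj hu hv hx).differentiableAt, ?_⟩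
  have hpos := rConj_add_fderiv_pos hu hv hx (by rwa [taylor]) (by rwa [taylor])
  rw [← neg_sub x y, map_neg] at hpos
  rw [real_inner_comm, inner_gradient_left]
  linarith

end Hyperplane

/-- Strict Euler-type inequality for the R-conjunction of two hyperplane functions
through a common point `x₃`, relative to a center `x*` lying strictly on the positive
side of both hyperplanes: with `γᵢ(z) = ⟨z - x₃, nᵢ⟩` (`i = 3, 4`) and
`f = γ₃ + γ₄ - √(γ₃² + γ₄²)`, at every point where `γ₃² + γ₄² ≠ 0` the function `f` is
differentiable and `⟨x - x*, ∇f(x)⟩ < f(x)`. -/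
theorem rconjunction_strict_euler_inequality (x₃ xs n₃ n₄ : EuclideanSpace ℝ (Fin 2))
    (h₃ : 0 < ⟪xs - x₃, n₃⟫) (h₄ : 0 < ⟪xs - x₃, n₄⟫)
    (f : EuclideanSpace ℝ (Fin 2) → ℝ)
    (hf : f = fun z => ⟪z - x₃, n₃⟫ + ⟪z - x₃, n₄⟫ -
      Real.sqrt (⟪z - x₃, n₃⟫ ^ 2 + ⟪z - x₃, n₄⟫ ^ 2))
    (x : EuclideanSpace ℝ (Fin 2))
    (hx : ⟪x - x₃, n₃⟫ ^ 2 + ⟪x - x₃, n₄⟫ ^ 2 ≠ 0) :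
    DifferentiableAt ℝ f x ∧ ⟪x - xs, gradient f x⟫ < f x := by
  subst hf
  exact rconjunction_strict_euler_inequality_general h₃ h₄ hx
end

section
/- Let C be a nonempty closed convex subset of the Euclidean plane ℝ², let y ∈ C and y_d ∈ ℝ², and let Π denote the metric projection of y_d onto C (the unique nearest point of C to y_d). Then ⟨y − y_d, y − Π⟩ ≥ ‖y − Π‖²; consequently ⟨y_d − y, y − Π⟩ ≤ −‖y − Π‖² ≤ 0, so that along the control vector field u(y) = −k(y − Π) with k > 0 the function V(y) = ‖y − y_d‖² satisfies ⟨∇V(y), u(y)⟩ ≤ −2k‖y − Π‖² ≤ 0. -/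
open RealInnerProductSpace

/-!
If `p` is nearest to `u` among the points of the segment from `p` to `y`, the angle at `p` between
`u` and `y` is not acute: `⟪u - p, y - p⟫ ≤ 0`. Splitting `y - u = (y - p) - (u - p)` then bounds
`⟪y - u, y - p⟫` below by `‖y - p‖²`. As `‖z - u‖²` has gradient `2 (y - u)` at `y`, moving along
`-(y - p)` changes it at rate at most `-2 ‖y - p‖²`.
-/

section

variable {E : Type*} [NormedAddCommGroup E] [InnerProductSpace ℝ E] {u p y : E}

lemma real_inner_sub_sub_nonpos_of_isMinOn_segment
    (hmin : IsMinOn (fun z => ‖u - z‖) (segment ℝ p y) p) : ⟪u - p, y - p⟫ ≤ 0 := by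
  have hp : p ∈ segment ℝ p y := left_mem_segment ℝ p y
  exact (norm_eq_iInf_iff_real_inner_le_zero (convex_segment p y) hp).1 (hmin.iInf_eq hp).symm
    y (right_mem_segment ℝ p y)

lemma norm_sub_sq_le_real_inner_of_isMinOn_segment
    (hmin : IsMinOn (fun z => ‖u - z‖) (segment ℝ p y) p) :
    ‖y - p‖ ^ 2 ≤ ⟪y - u, y - p⟫ :=
  calc
    ‖y - p‖ ^ 2 ≤ ‖y - p‖ ^ 2 - ⟪u - p, y - p⟫ :=
      (le_sub_self_iff _).2 (real_inner_sub_sub_nonpos_of_isMinOn_segment hmin)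
    _ = ⟪y - u, y - p⟫ := by
      rw [← real_inner_self_eq_norm_sq, ← inner_sub_left, sub_sub_sub_cancel_right]

variable [CompleteSpace E]

lemma hasGradientAt_norm_sub_sq (a x : E) :
    HasGradientAt (fun z => ‖z - a‖ ^ 2) ((2 : ℝ) • (x - a)) x := by
  rw [hasGradientAt_iff_hasFDerivAt]
  refine ((hasFDerivAt_id x).sub_const a).norm_sq.congr_fderiv ?_
  ext v
  simp

lemma inner_gradient_norm_sub_sq (a x v : E) :
    ⟪gradient (fun z => ‖z - a‖ ^ 2) x, v⟫ = 2 * ⟪x - a, v⟫ := by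
  rw [(hasGradientAt_norm_sub_sq a x).gradient, real_inner_smul_left]

lemma inner_gradient_norm_sub_sq_neg_smul_le_of_isMinOn_segment
    (hmin : IsMinOn (fun z => ‖u - z‖) (segment ℝ p y) p) {k : ℝ} (hk : 0 ≤ k) :
    ⟪gradient (fun z => ‖z - u‖ ^ 2) y, -(k • (y - p))⟫ ≤ -(2 * k * ‖y - p‖ ^ 2) :=
  calc
    ⟪gradient (fun z => ‖z - u‖ ^ 2) y, -(k • (y - p))⟫ = -(2 * k * ⟪y - u, y - p⟫) := by
      rw [inner_gradient_norm_sub_sq, inner_neg_right, real_inner_smul_right, mul_neg, mul_assoc]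
    _ ≤ -(2 * k * ‖y - p‖ ^ 2) := by
      gcongr
      exact norm_sub_sq_le_real_inner_of_isMinOn_segment hmin

theorem projection_lyapunov_decrease_general {C : Set E} (hC : StarConvex ℝ p C) (hy : y ∈ C)
    (hmin : IsMinOn (fun z => ‖u - z‖) C p) {k : ℝ} (hk : 0 ≤ k) :
    ‖y - p‖ ^ 2 ≤ ⟪y - u, y - p⟫ ∧
    ⟪u - y, y - p⟫ ≤ -‖y - p‖ ^ 2 ∧
    ⟪u - y, y - p⟫ ≤ 0 ∧
    ⟪gradient (fun z => ‖z - u‖ ^ 2) y, -(k • (y - p))⟫ ≤ -(2 * k * ‖y - p‖ ^ 2) ∧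
    ⟪gradient (fun z => ‖z - u‖ ^ 2) y, -(k • (y - p))⟫ ≤ 0 := by
  have hseg : IsMinOn (fun z => ‖u - z‖) (segment ℝ p y) p :=
    hmin.on_subset (hC.segment_subset hy)
  have hinner : ‖y - p‖ ^ 2 ≤ ⟪y - u, y - p⟫ := norm_sub_sq_le_real_inner_of_isMinOn_segment hseg
  have hinner_neg : ⟪u - y, y - p⟫ ≤ -‖y - p‖ ^ 2 := by
    rwa [← neg_sub y u, inner_neg_left, neg_le_neg_iff]
  have hdecrease := inner_gradient_norm_sub_sq_neg_smul_le_of_isMinOn_segment hseg hk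
  exact ⟨hinner, hinner_neg, hinner_neg.trans (neg_nonpos.2 (by positivity)),
    hdecrease, hdecrease.trans (neg_nonpos.2 (by positivity))⟩

end

/-- Lyapunov-decrease step for the reactive controller: if `C` is a nonempty closed
convex subset of the plane, `y ∈ C`, and `proj` is the metric projection of `y_d` onto
`C` (the nearest point of `C` to `y_d`), then `⟨y - y_d, y - proj⟩ ≥ ‖y - proj‖²`, hence
`⟨y_d - y, y - proj⟩ ≤ -‖y - proj‖² ≤ 0`, and along the control vector field
`u(y) = -k(y - proj)` with `k > 0` the function `V(y) = ‖y - y_d‖²` satisfies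
`⟨∇V(y), u(y)⟩ ≤ -2k‖y - proj‖² ≤ 0`. -/
theorem projection_lyapunov_decrease (C : Set (EuclideanSpace ℝ (Fin 2)))
    (hconv : Convex ℝ C) (hclosed : IsClosed C) (hne : C.Nonempty)
    (y yd proj : EuclideanSpace ℝ (Fin 2)) (hy : y ∈ C) (hprojC : proj ∈ C)
    (hproj : ∀ z ∈ C, ‖yd - proj‖ ≤ ‖yd - z‖)
    (k : ℝ) (hk : 0 < k) :
    ‖y - proj‖ ^ 2 ≤ ⟪y - yd, y - proj⟫ ∧
    ⟪yd - y, y - proj⟫ ≤ -‖y - proj‖ ^ 2 ∧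
    ⟪yd - y, y - proj⟫ ≤ 0 ∧
    ⟪gradient (fun z => ‖z - yd‖ ^ 2) y, -(k • (y - proj))⟫ ≤ -(2 * k * ‖y - proj‖ ^ 2) ∧
    ⟪gradient (fun z => ‖z - yd‖ ^ 2) y, -(k • (y - proj))⟫ ≤ 0 :=
  projection_lyapunov_decrease_general (hconv hprojC) hy hproj hk.le
end

section
/- Let v_max, ω_max, E, p, k_{v,nom}, k_{ω,nom} be positive reals, let λ ∈ (0, 1), and let v̂, ω̂, ϑ be nonzero reals. Define k_v := min( k_{v,nom}, E·v_max/|v̂|, λ·p·E·ω_max/(|v̂|·|ϑ|) ), k_ω := min( k_{ω,nom}, (1 − λ)·p·ω_max/|ω̂| ), v := k_v·v̂/E, and ω := p⁻¹·( k_ω·ω̂ − v·ϑ ). Then k_v > 0, k_ω > 0, |v| ≤ v_max, and |ω| ≤ ω_max. -/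
/-!
For a gain `k ≥ 0` and a scale `s > 0`, the number `s * c / |x|` is exactly the largest `k` with
`|k * x / s| ≤ c`, and every entry of the two minima except the nominal gains is such a threshold.
The pulled-back angular input is `kω * ωhat / p - kv * (vhat * ϑ) / (E * p)`; the entries containing
`ωmax` cap its two terms at the shares `1 - lam` and `lam` of `ωmax`, so the triangle inequality
keeps the difference within `ωmax`.
-/

section BoundedInputs

variable {𝕜 : Type*} [Field 𝕜] [LinearOrder 𝕜] [IsStrictOrderedRing 𝕜]

theorem abs_mul_div_le_iff_le_mul_div_abs {k x s c : 𝕜} (hk : 0 ≤ k) (hx : x ≠ 0) (hs : 0 < s) :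
    |k * x / s| ≤ c ↔ k ≤ s * c / |x| := by
  rw [abs_div, abs_mul, abs_of_nonneg hk, abs_of_pos hs, div_le_iff₀' hs,
    le_div_iff₀ (abs_pos.mpr hx)]

theorem abs_sub_le_of_abs_le_one_sub_mul_of_abs_le_mul {a b c t : 𝕜}
    (ha : |a| ≤ (1 - t) * c) (hb : |b| ≤ t * c) : |a - b| ≤ c :=
  calc
    |a - b| ≤ |a| + |b| := abs_sub a b
    _ ≤ (1 - t) * c + t * c := add_le_add ha hb
    _ = c := by ring

theorem bounded_inputs_diffdrive_general (vmax ωmax E p kvnom kωnom : 𝕜)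
    (hvmax : 0 < vmax) (hωmax : 0 < ωmax) (hE : 0 < E) (hp : 0 < p)
    (hkvnom : 0 < kvnom) (hkωnom : 0 < kωnom)
    (lam : 𝕜) (hlam : lam ∈ Set.Ioo (0 : 𝕜) 1)
    (vhat ωhat ϑ : 𝕜) (hvhat : vhat ≠ 0) (hωhat : ωhat ≠ 0) (hϑ : ϑ ≠ 0)
    (kv kω v ω : 𝕜)
    (hkv : kv = min kvnom (min (E * vmax / |vhat|) (lam * p * E * ωmax / (|vhat| * |ϑ|))))
    (hkω : kω = min kωnom ((1 - lam) * p * ωmax / |ωhat|))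
    (hv : v = kv * vhat / E)
    (hω : ω = p⁻¹ * (kω * ωhat - v * ϑ)) :
    0 < kv ∧ 0 < kω ∧ |v| ≤ vmax ∧ |ω| ≤ ωmax := by
  obtain ⟨hlam_pos, hlam_lt_one⟩ := hlam
  have kv_pos : 0 < kv := hkv ▸ lt_min hkvnom (lt_min (by positivity) (by positivity))
  have kω_pos : 0 < kω := hkω ▸ lt_min hkωnom
    (div_pos (mul_pos (mul_pos (sub_pos.mpr hlam_lt_one) hp) hωmax) (abs_pos.mpr hωhat))
  obtain ⟨-, kv_le_linear, kv_le_angular⟩ := by simpa only [le_min_iff] using hkv.le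
  obtain ⟨-, kω_le⟩ := le_min_iff.mp hkω.le
  have abs_v_le : |v| ≤ vmax :=
    hv ▸ (abs_mul_div_le_iff_le_mul_div_abs kv_pos.le hvhat hE).mpr kv_le_linear
  have abs_steering_le : |kω * ωhat / p| ≤ (1 - lam) * ωmax := by
    rw [abs_mul_div_le_iff_le_mul_div_abs kω_pos.le hωhat hp]
    exact kω_le.trans_eq (by ring)
  have abs_coupling_le : |kv * (vhat * ϑ) / (E * p)| ≤ lam * ωmax := by
    rw [abs_mul_div_le_iff_le_mul_div_abs kv_pos.le (mul_ne_zero hvhat hϑ) (mul_pos hE hp), abs_mul]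
    exact kv_le_angular.trans_eq (by ring)
  have ω_eq : ω = kω * ωhat / p - kv * (vhat * ϑ) / (E * p) := by
    rw [hω, hv]
    field_simp
  exact ⟨kv_pos, kω_pos, abs_v_le,
    ω_eq ▸ abs_sub_le_of_abs_le_one_sub_mul_of_abs_le_mul abs_steering_le abs_coupling_le⟩

end BoundedInputs

/-- The adaptive gain selection for the bounded-input differential drive controller:
with `k_v = min(k_{v,nom}, E·v_max/|v̂|, λ·p·E·ω_max/(|v̂|·|ϑ|))` and
`k_ω = min(k_{ω,nom}, (1 - λ)·p·ω_max/|ω̂|)`, the gains are positive and the pulled-back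
physical inputs `v = k_v·v̂/E` and `ω = p⁻¹·(k_ω·ω̂ - v·ϑ)` respect the command limits
`|v| ≤ v_max` and `|ω| ≤ ω_max`. -/
theorem bounded_inputs_diffdrive (vmax ωmax E p kvnom kωnom : ℝ)
    (hvmax : 0 < vmax) (hωmax : 0 < ωmax) (hE : 0 < E) (hp : 0 < p)
    (hkvnom : 0 < kvnom) (hkωnom : 0 < kωnom)
    (lam : ℝ) (hlam : lam ∈ Set.Ioo (0 : ℝ) 1)
    (vhat ωhat ϑ : ℝ) (hvhat : vhat ≠ 0) (hωhat : ωhat ≠ 0) (hϑ : ϑ ≠ 0)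
    (kv kω v ω : ℝ)
    (hkv : kv = min kvnom (min (E * vmax / |vhat|) (lam * p * E * ωmax / (|vhat| * |ϑ|))))
    (hkω : kω = min kωnom ((1 - lam) * p * ωmax / |ωhat|))
    (hv : v = kv * vhat / E)
    (hω : ω = p⁻¹ * (kω * ωhat - v * ϑ)) :
    0 < kv ∧ 0 < kω ∧ |v| ≤ vmax ∧ |ω| ≤ ωmax :=
  bounded_inputs_diffdrive_general vmax ωmax E p kvnom kωnom hvmax hωmax hE hp hkvnom hkωnom
    lam hlam vhat ωhat ϑ hvhat hωhat hϑ kv kω v ω hkv hkω hv hω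
end
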